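/- Let E be a unital idempotent CPTP map on d×d complex matrices, let a ∈ (0,1)∪(1,2], and let ρ be a positive definite density matrix. Then for every positive definite density matrix σ with E(σ) = σ one has S̃_a(ρ|σ) ≥ (Tr((E(ρ^a))^{1/a}) − 1)/(a − 1). -/

import Mathlib

open Matrix
open scoped ComplexOrder

/-- Matrix power `A ^ t` for real `t`, via the continuous functional calculus
(applying `x ↦ x ^ t` to the eigenvalues of a Hermitian matrix `A`). -/
noncomputable def mpow {d : ℕ} (A : Matrix (Fin d) (Fin d) ℂ) (t : ℝ) :
    Matrix (Fin d) (Fin d) ℂ :=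
  cfc (fun x : ℝ => x ^ t) A

/-- The Tsallis-based relative entropy
`S̃_a(ρ|σ) = ((Tr (ρ^a σ^(1-a)))^(1/a) - 1) / (a - 1)`. -/
noncomputable def tsallis {d : ℕ} (a : ℝ) (ρ σ : Matrix (Fin d) (Fin d) ℂ) : ℝ :=
  ((((mpow ρ a * mpow σ (1 - a)).trace).re) ^ (1 / a) - 1) / (a - 1)

/-!
A fixed point `σ` of a unital trace-preserving map `E` commutes with all Kraus operators of `E`,
because the positive matrices `⁅Kᵢ, σ⁆ ⁅Kᵢ, σ⁆ᴴ` have total trace zero. Hence `E` may be inserted in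
`Tr (ρ ^ a σ ^ (1 - a))`, so that `S̃_a(ρ|σ) = S̃_a(Y|σ)` for `Y = E(ρ ^ a) ^ (1 / a)`, and it
remains to see that `S̃_a(Y|σ) ≥ (Tr Y - 1) / (a - 1)` for every `Y ≥ 0`. This is Hölder's
inequality for the trace: with `wᵢⱼ = |⟨uᵢ, vⱼ⟩|²` for eigenvectors `uᵢ` of `Y` and `vⱼ` of `σ`, one
has `Tr (f(Y) g(σ)) = ∑ᵢⱼ wᵢⱼ f(αᵢ) g(βⱼ)`, which reduces it to the weighted scalar inequality.
-/

theorem sum_mul_rpow_mul_rpow_le {ι : Type*} (s : Finset ι) {w u v : ι → ℝ} {θ : ℝ}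
    (hθ0 : 0 < θ) (hθ1 : θ < 1)
    (hw : ∀ i ∈ s, 0 ≤ w i) (hu : ∀ i ∈ s, 0 ≤ u i) (hv : ∀ i ∈ s, 0 ≤ v i) :
    ∑ i ∈ s, w i * (u i ^ θ * v i ^ (1 - θ)) ≤
      (∑ i ∈ s, w i * u i) ^ θ * (∑ i ∈ s, w i * v i) ^ (1 - θ) := by
  have hwu (i) (hi : i ∈ s) : 0 ≤ w i * u i := mul_nonneg (hw i hi) (hu i hi)
  have hwv (i) (hi : i ∈ s) : 0 ≤ w i * v i := mul_nonneg (hw i hi) (hv i hi)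
  have hsplit (i) (hi : i ∈ s) : w i * (u i ^ θ * v i ^ (1 - θ)) =
      (w i * u i) ^ θ * (w i * v i) ^ (1 - θ) := by
    rw [Real.mul_rpow (hw i hi) (hu i hi), Real.mul_rpow (hw i hi) (hv i hi), mul_mul_mul_comm,
      ← Real.rpow_add' (hw i hi) (by simp), add_sub_cancel, Real.rpow_one]
  have hholder := Real.inner_le_Lp_mul_Lq_of_nonneg s (.inv_one_sub_inv hθ0 hθ1)
    (fun i hi => Real.rpow_nonneg (hwu i hi) θ) (fun i hi => Real.rpow_nonneg (hwv i hi) (1 - θ))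
  rw [Finset.sum_congr rfl hsplit]
  simpa only [one_div, inv_inv,
    Finset.sum_congr rfl fun i hi => Real.rpow_rpow_inv (hwu i hi) hθ0.ne',
    Finset.sum_congr rfl fun i hi => Real.rpow_rpow_inv (hwv i hi) (sub_pos.2 hθ1).ne']
    using hholder

section KrausMap

variable {ι n R 𝕜 : Type*} [Fintype ι] [Fintype n] [CommRing R] [StarRing R] [RCLike 𝕜]

/-- The completely positive map `X ↦ ∑ i, K i * X * (K i)ᴴ` with Kraus operators `K i`. It is trace
preserving when `∑ i, (K i)ᴴ * K i = 1`. -/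
def krausMap (K : ι → Matrix n n R) (X : Matrix n n R) : Matrix n n R :=
  ∑ i, K i * X * (K i)ᴴ

theorem conjTranspose_krausMap (K : ι → Matrix n n R) (X : Matrix n n R) :
    (krausMap K X)ᴴ = krausMap K Xᴴ := by
  simp only [krausMap, conjTranspose_sum, conjTranspose_mul, conjTranspose_conjTranspose,
    Matrix.mul_assoc]

theorem posSemidef_krausMap (K : ι → Matrix n n 𝕜) {X : Matrix n n 𝕜} (hX : X.PosSemidef) :
    (krausMap K X).PosSemidef :=
  posSemidef_sum _ fun i _ => hX.mul_mul_conjTranspose_same (K i)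

variable [DecidableEq n]

theorem trace_krausMap_mul_of_commute {K : ι → Matrix n n R} (hK : ∑ i, (K i)ᴴ * K i = 1)
    (X : Matrix n n R) {Y : Matrix n n R} (hY : ∀ i, Commute Y (K i)) :
    (krausMap K X * Y).trace = (X * Y).trace := by
  have hterm (i : ι) : (K i * X * (K i)ᴴ * Y).trace = ((K i)ᴴ * K i * (Y * X)).trace := by
    rw [mul_assoc, trace_mul_comm]
    simp only [mul_assoc, (hY i).symm.left_comm]
  rw [krausMap, Finset.sum_mul, trace_sum, Finset.sum_congr rfl fun i _ => hterm i, ← trace_sum,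
    ← Finset.sum_mul, hK, one_mul, trace_mul_comm]

theorem trace_krausMap {K : ι → Matrix n n R} (hK : ∑ i, (K i)ᴴ * K i = 1) (X : Matrix n n R) :
    (krausMap K X).trace = X.trace := by
  simpa only [mul_one] using trace_krausMap_mul_of_commute hK X fun i => Commute.one_left (K i)

theorem sum_lie_mul_conjTranspose_lie (K : ι → Matrix n n R) (X : Matrix n n R) :
    ∑ i, ⁅K i, X⁆ * ⁅K i, X⁆ᴴ = krausMap K (X * Xᴴ) - krausMap K X * Xᴴ
      - X * krausMap K Xᴴ + X * krausMap K 1 * Xᴴ := by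
  simp only [krausMap, Finset.sum_mul, Finset.mul_sum, ← Finset.sum_sub_distrib,
    ← Finset.sum_add_distrib, Ring.lie_def, conjTranspose_sub, conjTranspose_mul]
  exact Finset.sum_congr rfl fun i _ => by noncomm_ring

theorem commute_of_krausMap_eq_self {K : ι → Matrix n n 𝕜} (hK : ∑ i, (K i)ᴴ * K i = 1)
    (hunital : krausMap K 1 = 1) {X : Matrix n n 𝕜} (hX : krausMap K X = X) (i : ι) :
    Commute X (K i) := by
  have hXstar : krausMap K Xᴴ = Xᴴ := by rw [← conjTranspose_krausMap, hX]
  have htrace : ∑ i, (⁅K i, X⁆ * ⁅K i, X⁆ᴴ).trace = 0 := by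
    rw [← trace_sum, sum_lie_mul_conjTranspose_lie, hX, hXstar, hunital, mul_one, sub_add_cancel,
      trace_sub, trace_krausMap hK, sub_self]
  have hzero : (⁅K i, X⁆ * ⁅K i, X⁆ᴴ).trace = 0 :=
    (Finset.sum_eq_zero_iff_of_nonneg fun j _ =>
      (posSemidef_self_mul_conjTranspose ⁅K j, X⁆).trace_nonneg).1 htrace i (Finset.mem_univ i)
  exact (commute_iff_lie_eq.2 (trace_mul_conjTranspose_self_eq_zero_iff.1 hzero)).symm

end KrausMap

section FunctionalCalculus

variable {n 𝕜 : Type*} [Fintype n] [DecidableEq n] [RCLike 𝕜] {A B : Matrix n n 𝕜}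

open scoped MatrixOrder in
theorem posSemidef_cfc_rpow (hA : A.PosSemidef) (t : ℝ) :
    (cfc (fun x : ℝ => x ^ t) A).PosSemidef :=
  nonneg_iff_posSemidef.1 <| cfc_nonneg fun _ hx =>
    Real.rpow_nonneg (spectrum_nonneg_of_nonneg hA.nonneg hx) t

open scoped MatrixOrder in
theorem cfc_rpow_cfc_rpow_inv (hA : A.PosSemidef) {t : ℝ} (ht : t ≠ 0) :
    cfc (fun x : ℝ => x ^ t) (cfc (fun x : ℝ => x ^ t⁻¹) A) = A := by
  rw [← cfc_comp (· ^ t) (· ^ t⁻¹) A hA.1.isSelfAdjoint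
    ((A.finite_real_spectrum.image _).continuousOn _) (A.finite_real_spectrum.continuousOn _)]
  conv_rhs => rw [← cfc_id ℝ A hA.1.isSelfAdjoint]
  exact cfc_congr fun x hx => Real.rpow_inv_rpow (spectrum_nonneg_of_nonneg hA.nonneg hx) ht

/-- The overlap `|⟨uᵢ, vⱼ⟩|²` of the eigenvectors `uᵢ` of `A` and `vⱼ` of `B`, for `p = (i, j)`.
With these weights, traces of products `f(A) g(B)` become sums over pairs of eigenvalues. -/
noncomputable def eigenOverlap (hA : A.IsHermitian) (hB : B.IsHermitian) (p : n × n) : ℝ :=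
  ‖inner 𝕜 (hA.eigenvectorBasis p.1) (hB.eigenvectorBasis p.2)‖ ^ 2

theorem eigenOverlap_nonneg (hA : A.IsHermitian) (hB : B.IsHermitian) (p : n × n) :
    0 ≤ eigenOverlap hA hB p :=
  sq_nonneg _

theorem star_eigenvectorUnitary_mul_eigenvectorUnitary_apply
    (hA : A.IsHermitian) (hB : B.IsHermitian) (i j : n) :
    (star (hA.eigenvectorUnitary : Matrix n n 𝕜) * hB.eigenvectorUnitary) i j =
      inner 𝕜 (hA.eigenvectorBasis i) (hB.eigenvectorBasis j) := by
  simp [mul_apply, star_apply, PiLp.inner_apply, mul_comm]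

theorem trace_diagonal_mul_mul_diagonal_mul_conjTranspose (W : Matrix n n 𝕜) (u v : n → ℝ) :
    (diagonal (RCLike.ofReal ∘ u) * W * diagonal (RCLike.ofReal ∘ v) * Wᴴ).trace =
      ((∑ p : n × n, ‖W p.1 p.2‖ ^ 2 * (u p.1 * v p.2) : ℝ) : 𝕜) := by
  rw [Fintype.sum_prod_type, trace]
  push_cast
  refine Finset.sum_congr rfl fun i _ => ?_
  rw [diag_apply, mul_apply]
  refine Finset.sum_congr rfl fun j _ => ?_
  simp only [mul_diagonal, diagonal_mul, conjTranspose_apply, RCLike.star_def, ← RCLike.mul_conj,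
    Function.comp_apply]
  ring

theorem trace_cfc_mul_cfc (hA : A.IsHermitian) (hB : B.IsHermitian) (f g : ℝ → ℝ) :
    (cfc f A * cfc g B).trace =
      ((∑ p : n × n, eigenOverlap hA hB p *
        (f (hA.eigenvalues p.1) * g (hB.eigenvalues p.2)) : ℝ) : 𝕜) := by
  have h := trace_diagonal_mul_mul_diagonal_mul_conjTranspose
    (star (hA.eigenvectorUnitary : Matrix n n 𝕜) * (hB.eigenvectorUnitary : Matrix n n 𝕜))
    (f ∘ hA.eigenvalues) (g ∘ hB.eigenvalues)
  simp only [star_eigenvectorUnitary_mul_eigenvectorUnitary_apply] at h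
  refine Eq.trans ?_ h
  rw [hA.cfc_eq, hB.cfc_eq, IsHermitian.cfc, IsHermitian.cfc, Unitary.conjStarAlgAut_apply,
    Unitary.conjStarAlgAut_apply, mul_assoc, mul_assoc, trace_mul_comm]
  simp only [← star_eq_conjTranspose, star_mul, star_star, mul_assoc]

theorem re_trace_cfc_mul_cfc (hA : A.IsHermitian) (hB : B.IsHermitian) (f g : ℝ → ℝ) :
    RCLike.re (cfc f A * cfc g B).trace =
      ∑ p : n × n, eigenOverlap hA hB p *
        (f (hA.eigenvalues p.1) * g (hB.eigenvalues p.2)) := by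
  rw [trace_cfc_mul_cfc hA hB, RCLike.ofReal_re]

omit [DecidableEq n] in
theorem re_trace_mul_nonneg (hA : A.PosSemidef) (hB : B.PosSemidef) :
    0 ≤ RCLike.re (A * B).trace := by
  classical
  have h := re_trace_cfc_mul_cfc hA.1 hB.1 id id
  rw [cfc_id ℝ A hA.1.isSelfAdjoint, cfc_id ℝ B hB.1.isSelfAdjoint] at h
  rw [h]
  exact Finset.sum_nonneg fun p _ => mul_nonneg (eigenOverlap_nonneg hA.1 hB.1 p) <|
    mul_nonneg (hA.eigenvalues_nonneg p.1) (hB.eigenvalues_nonneg p.2)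

theorem re_trace_eq_sum_eigenOverlap_left (hA : A.IsHermitian) (hB : B.IsHermitian) :
    RCLike.re A.trace = ∑ p : n × n, eigenOverlap hA hB p * hA.eigenvalues p.1 := by
  simpa [cfc_id ℝ A hA.isSelfAdjoint, cfc_const_one ℝ B hB.isSelfAdjoint]
    using re_trace_cfc_mul_cfc hA hB id fun _ => 1

theorem re_trace_eq_sum_eigenOverlap_right (hA : A.IsHermitian) (hB : B.IsHermitian) :
    RCLike.re B.trace = ∑ p : n × n, eigenOverlap hA hB p * hB.eigenvalues p.2 := by
  simpa [cfc_id ℝ B hB.isSelfAdjoint, cfc_const_one ℝ A hA.isSelfAdjoint]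
    using re_trace_cfc_mul_cfc hA hB (fun _ => 1) id

theorem re_trace_cfc_rpow_mul_cfc_rpow_le (hA : A.PosSemidef) (hB : B.PosSemidef) {θ : ℝ}
    (hθ0 : 0 < θ) (hθ1 : θ < 1) :
    RCLike.re (cfc (fun x : ℝ => x ^ θ) A * cfc (fun x : ℝ => x ^ (1 - θ)) B).trace ≤
      RCLike.re A.trace ^ θ * RCLike.re B.trace ^ (1 - θ) := by
  rw [re_trace_cfc_mul_cfc hA.1 hB.1, re_trace_eq_sum_eigenOverlap_left hA.1 hB.1,
    re_trace_eq_sum_eigenOverlap_right hA.1 hB.1]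
  exact sum_mul_rpow_mul_rpow_le _ hθ0 hθ1 (fun p _ => eigenOverlap_nonneg hA.1 hB.1 p)
    (fun p _ => hA.eigenvalues_nonneg p.1) (fun p _ => hB.eigenvalues_nonneg p.2)

theorem re_trace_le_re_trace_cfc_rpow_mul_cfc_rpow (hA : A.PosSemidef) (hB : B.PosDef) {a : ℝ}
    (ha : 1 < a) :
    RCLike.re A.trace ≤
      RCLike.re (cfc (fun x : ℝ => x ^ a) A * cfc (fun x : ℝ => x ^ (1 - a)) B).trace ^ a⁻¹ *
        RCLike.re B.trace ^ (1 - a⁻¹) := by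
  have ha0 : 0 < a := one_pos.trans ha
  have hfactor (p : n × n) : hA.1.eigenvalues p.1 =
      (hA.1.eigenvalues p.1 ^ a * hB.1.eigenvalues p.2 ^ (1 - a)) ^ a⁻¹ *
        hB.1.eigenvalues p.2 ^ (1 - a⁻¹) := by
    have hα := hA.eigenvalues_nonneg p.1
    have hβ := hB.eigenvalues_pos p.2
    have hexp : (1 - a) * a⁻¹ + (1 - a⁻¹) = 0 := by field_simp; ring
    rw [Real.mul_rpow (by positivity) (by positivity), Real.rpow_rpow_inv hα ha0.ne', mul_assoc,
      ← Real.rpow_mul hβ.le, ← Real.rpow_add hβ, hexp, Real.rpow_zero, mul_one]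
  rw [re_trace_cfc_mul_cfc hA.1 hB.1, re_trace_eq_sum_eigenOverlap_left hA.1 hB.1,
    re_trace_eq_sum_eigenOverlap_right hA.1 hB.1,
    Finset.sum_congr rfl fun p _ => congrArg (eigenOverlap hA.1 hB.1 p * ·) (hfactor p)]
  exact sum_mul_rpow_mul_rpow_le _ (inv_pos.2 ha0) (inv_lt_one_of_one_lt₀ ha)
    (fun p _ => eigenOverlap_nonneg hA.1 hB.1 p)
    (fun p _ => mul_nonneg (Real.rpow_nonneg (hA.eigenvalues_nonneg p.1) _)
      (Real.rpow_nonneg (hB.eigenvalues_pos p.2).le _))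
    (fun p _ => (hB.eigenvalues_pos p.2).le)

end FunctionalCalculus

section Tsallis

variable {d : ℕ} {a : ℝ} {ρ σ : Matrix (Fin d) (Fin d) ℂ}

theorem re_trace_sub_one_div_le_tsallis (ha0 : 0 < a) (ha1 : a ≠ 1) (hρ : ρ.PosSemidef)
    (hσ : σ.PosDef) (hσtr : σ.trace = 1) : (ρ.trace.re - 1) / (a - 1) ≤ tsallis a ρ σ := by
  have hσre (t : ℝ) : RCLike.re σ.trace ^ t = 1 := by rw [hσtr, RCLike.one_re, Real.one_rpow]
  rw [tsallis, one_div]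
  rcases ha1.lt_or_gt with ha | ha
  · refine div_le_div_of_nonpos_of_le (sub_nonpos.2 ha.le) (sub_le_sub_right ?_ 1)
    have hholder := re_trace_cfc_rpow_mul_cfc_rpow_le hρ hσ.posSemidef ha0 ha
    rw [hσre, mul_one] at hholder
    exact (Real.rpow_inv_le_iff_of_pos
      (re_trace_mul_nonneg (posSemidef_cfc_rpow hρ a) (posSemidef_cfc_rpow hσ.posSemidef (1 - a)))
      (RCLike.nonneg_iff.1 hρ.trace_nonneg).1 ha0).2 hholder
  · refine div_le_div_of_nonneg_right (sub_le_sub_right ?_ 1) (sub_nonneg.2 ha.le)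
    have hholder := re_trace_le_re_trace_cfc_rpow_mul_cfc_rpow hρ hσ ha
    rwa [hσre, mul_one] at hholder

variable {ι : Type*} [Fintype ι] {K : ι → Matrix (Fin d) (Fin d) ℂ}

theorem tsallis_eq_tsallis_mpow_krausMap (hK : ∑ i, (K i)ᴴ * K i = 1)
    (hunital : krausMap K 1 = 1) (ha : a ≠ 0) (hρ : ρ.PosSemidef) (hfix : krausMap K σ = σ) :
    tsallis a ρ σ = tsallis a (mpow (krausMap K (mpow ρ a)) (1 / a)) σ := by
  have hcomm (i : ι) : Commute (mpow σ (1 - a)) (K i) :=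
    (commute_of_krausMap_eq_self hK hunital hfix i).cfc_real _
  have hpow : mpow (mpow (krausMap K (mpow ρ a)) (1 / a)) a = krausMap K (mpow ρ a) := by
    rw [one_div]
    exact cfc_rpow_cfc_rpow_inv (posSemidef_krausMap K (posSemidef_cfc_rpow hρ a)) ha
  rw [tsallis, tsallis, hpow, trace_krausMap_mul_of_commute hK _ hcomm]

theorem stmt_2_general (hK : ∑ i, (K i)ᴴ * K i = 1) (hunital : krausMap K 1 = 1)
    (ha0 : 0 < a) (ha1 : a ≠ 1) (hρ : ρ.PosSemidef) (hσ : σ.PosDef) (hσtr : σ.trace = 1)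
    (hfix : krausMap K σ = σ) :
    tsallis a ρ σ ≥ ((mpow (krausMap K (mpow ρ a)) (1 / a)).trace.re - 1) / (a - 1) := by
  rw [tsallis_eq_tsallis_mpow_krausMap hK hunital ha0.ne' hρ hfix]
  exact re_trace_sub_one_div_le_tsallis ha0 ha1
    (posSemidef_cfc_rpow (posSemidef_krausMap K (posSemidef_cfc_rpow hρ a)) _) hσ hσtr

end Tsallis

/-- For a unital idempotent CPTP map `E`, `a ∈ (0,1) ∪ (1,2]` and a positive definite
density matrix `ρ`: every positive definite density matrix `σ` fixed by `E` satisfies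
`S̃_a(ρ|σ) ≥ (Tr((E(ρ^a))^(1/a)) - 1)/(a - 1)`. -/
theorem stmt_2 {d : ℕ}
    (E : Matrix (Fin d) (Fin d) ℂ →ₗ[ℂ] Matrix (Fin d) (Fin d) ℂ)
    (hKraus : ∃ (n : ℕ) (K : Fin n → Matrix (Fin d) (Fin d) ℂ),
      (∀ X, E X = ∑ i, K i * X * (K i)ᴴ) ∧ ∑ i, (K i)ᴴ * K i = 1)
    (hUnital : E 1 = 1)
    (hIdem : ∀ X, E (E X) = E X)
    (a : ℝ) (ha : a ∈ Set.Ioo (0 : ℝ) 1 ∪ Set.Ioc (1 : ℝ) 2)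
    (ρ : Matrix (Fin d) (Fin d) ℂ) (hρ : ρ.PosDef) (hρtr : ρ.trace = 1) :
    ∀ σ : Matrix (Fin d) (Fin d) ℂ, σ.PosDef → σ.trace = 1 → E σ = σ →
      tsallis a ρ σ ≥ (((mpow (E (mpow ρ a)) (1 / a)).trace).re - 1) / (a - 1) := by
  intro σ hσ hσtr hfix
  obtain ⟨_, K, hE, hK⟩ := hKraus
  have ha0 : 0 < a := ha.elim And.left fun h => one_pos.trans h.1
  have ha1 : a ≠ 1 := ha.elim (fun h => h.2.ne) fun h => h.1.ne'
  rw [hE]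
  exact stmt_2_general hK ((hE 1).symm.trans hUnital) ha0 ha1 hρ.posSemidef hσ hσtr
    ((hE σ).symm.trans hfix)
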